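/- There is an absolute constant C > 0 such that for every integer n ≥ 1 and every function f holomorphic on the open unit disk 𝔻 whose derivative f' extends continuously to the closed unit disk with |f'(z)| ≤ L for all |z| ≤ 1, there exists a polynomial G of degree at most n with G(0) = f(0) and sup_{|z|=1} |G(z) − f(z)| ≤ C·L/n. -/

import Mathlib

open Metric

namespace VPaux

open Complex MeasureTheory

lemma integral_exp_int (l : ℤ) :
    (∫ t in (0:ℝ)..(2 * Real.pi), Complex.exp ((l : ℂ) * t * I))
      = if l = 0 then (2 * Real.pi : ℂ) else 0 := by
  split_ifs with h
  · subst h; simp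
  · have hc : (l : ℂ) * I ≠ 0 := mul_ne_zero (by exact_mod_cast h) I_ne_zero
    have h1 : ∀ t : ℝ, Complex.exp ((l : ℂ) * t * I) = Complex.exp (((l : ℂ) * I) * t) := by
      intro t; congr 1; ring
    simp_rw [h1]
    rw [integral_exp_mul_complex hc]
    have h2 : (l : ℂ) * I * ((2 * Real.pi : ℝ) : ℂ) = l * (2 * Real.pi * I) := by
      push_cast; ring
    rw [h2, Complex.exp_int_mul_two_pi_mul_I]
    simp

/-- The trigonometric polynomial with coefficients `c`. -/
noncomputable def P (c : ℕ → ℝ) (M : ℕ) (t : ℝ) : ℂ :=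
  ∑ i ∈ Finset.range M, (c i : ℂ) * Complex.exp (t * I) ^ i

lemma P_cont (c : ℕ → ℝ) (M : ℕ) : Continuous (P c M) := by
  unfold P; fun_prop

lemma normSq_P (c : ℕ → ℝ) (M : ℕ) (t : ℝ) :
    ((‖P c M t‖ ^ 2 : ℝ) : ℂ) = ∑ i ∈ Finset.range M, ∑ k ∈ Finset.range M,
      ((c i * c k : ℝ) : ℂ) * Complex.exp ((((i : ℤ) - k : ℤ) : ℂ) * t * I) := by
  rw [← Complex.normSq_eq_norm_sq, Complex.normSq_eq_conj_mul_self, mul_comm]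
  unfold P
  rw [map_sum, Finset.sum_mul_sum]
  refine Finset.sum_congr rfl fun i _ => Finset.sum_congr rfl fun k _ => ?_
  rw [map_mul, map_pow, ← Complex.exp_conj, Complex.conj_ofReal, map_mul, Complex.conj_ofReal,
    Complex.conj_I, ← Complex.exp_nat_mul, ← Complex.exp_nat_mul]
  have : Complex.exp ((((i : ℤ) - k : ℤ) : ℂ) * t * I)
    = Complex.exp (i * (t * I)) * Complex.exp (k * (t * -I)) := by
    rw [← Complex.exp_add]; congr 1; push_cast; ring
  rw [this]; push_cast; ring

lemma coeff_integral (a : ℕ → ℂ) (f : ℂ → ℂ) (z : ℂ)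
    (hf : ∀ t : ℝ, HasSum (fun n => a n * (z * Complex.exp (-(t * I))) ^ n)
      (f (z * Complex.exp (-(t * I)))))
    (i k : ℕ) :
    (∫ t in (0:ℝ)..(2 * Real.pi), f (z * Complex.exp (-(t * I))) *
      Complex.exp ((((i : ℤ) - k : ℤ) : ℂ) * t * I))
      = 2 * Real.pi * if k ≤ i then a (i - k) * z ^ (i - k) else 0 := by
  have hs : Summable (fun n => ‖a n * z ^ n‖) := by
    have := (hf 0).summable.norm
    simpa using this
  have key : ∀ (n : ℕ) (t : ℝ), a n * (z * Complex.exp (-(t * I))) ^ n *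
      Complex.exp ((((i : ℤ) - k : ℤ) : ℂ) * t * I)
      = a n * z ^ n * Complex.exp ((((i : ℤ) - k - n : ℤ) : ℂ) * t * I) := by
    intro n t
    have : Complex.exp ((((i : ℤ) - k - n : ℤ) : ℂ) * t * I)
      = Complex.exp (n * -(t * I)) * Complex.exp ((((i : ℤ) - k : ℤ) : ℂ) * t * I) := by
      rw [← Complex.exp_add]; congr 1; push_cast; ring
    rw [this, mul_pow, ← Complex.exp_nat_mul]; ring
  have h1 := intervalIntegral.hasSum_integral_of_dominated_convergence (μ := volume)
    (a := 0) (b := 2 * Real.pi)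
    (F := fun (n : ℕ) (t : ℝ) => a n * z ^ n * Complex.exp ((((i : ℤ) - k - n : ℤ) : ℂ) * t * I))
    (f := fun t : ℝ => f (z * Complex.exp (-(t * I))) *
      Complex.exp ((((i : ℤ) - k : ℤ) : ℂ) * t * I))
    (bound := fun n _ => ‖a n * z ^ n‖)
    (fun n => (by fun_prop : Continuous _).aestronglyMeasurable)
    (fun n => Filter.Eventually.of_forall fun t _ => by
      have : ((((i : ℤ) - k - n : ℤ) : ℂ) * t * I) = (((((i : ℤ) - k - n : ℤ) : ℝ) * t : ℝ) : ℂ) * I := by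
        push_cast; ring
      rw [norm_mul, this, Complex.norm_exp_ofReal_mul_I, mul_one])
    (Filter.Eventually.of_forall fun t _ => hs)
    (by simp)
    (Filter.Eventually.of_forall fun t _ => by
      have := (hf t).mul_right (Complex.exp ((((i : ℤ) - k : ℤ) : ℂ) * t * I))
      simpa only [key] using this)
  simp only [intervalIntegral.integral_const_mul, integral_exp_int] at h1
  refine h1.unique ?_
  split_ifs with hk
  · convert hasSum_single (i - k) ?_ using 1
    · rw [if_pos (by omega)]; ring
    · intro n hn
      rw [if_neg (by omega)]; simp
  · have hz : (fun n : ℕ => a n * z ^ n *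
        if (i : ℤ) - k - n = 0 then (2 * Real.pi : ℂ) else 0) = fun _ => 0 := by
      funext n
      rw [if_neg (by omega), mul_zero]
    rw [hz, mul_zero]
    exact hasSum_zero

lemma main_integral (a : ℕ → ℂ) (f : ℂ → ℂ) (z : ℂ) (c : ℕ → ℝ) (M : ℕ)
    (hf : ∀ t : ℝ, HasSum (fun n => a n * (z * Complex.exp (-(t * I))) ^ n)
      (f (z * Complex.exp (-(t * I)))))
    (hcont : Continuous fun t : ℝ => f (z * Complex.exp (-(t * I)))) :
    (∫ t in (0:ℝ)..(2 * Real.pi), f (z * Complex.exp (-(t * I))) * ((‖P c M t‖ ^ 2 : ℝ) : ℂ))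
      = 2 * Real.pi * ∑ i ∈ Finset.range M, ∑ k ∈ Finset.range M,
        ((c i * c k : ℝ) : ℂ) * if k ≤ i then a (i - k) * z ^ (i - k) else 0 := by
  have h : ∀ t : ℝ, f (z * Complex.exp (-(t * I))) * ((‖P c M t‖ ^ 2 : ℝ) : ℂ)
      = ∑ i ∈ Finset.range M, ∑ k ∈ Finset.range M,
      ((c i * c k : ℝ) : ℂ) * (f (z * Complex.exp (-(t * I))) *
        Complex.exp ((((i : ℤ) - k : ℤ) : ℂ) * t * I)) := by
    intro t
    rw [normSq_P, Finset.mul_sum]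
    refine Finset.sum_congr rfl fun i _ => ?_
    rw [Finset.mul_sum]
    refine Finset.sum_congr rfl fun k _ => ?_
    ring
  simp_rw [h]
  rw [intervalIntegral.integral_finsetSum, Finset.mul_sum]
  · refine Finset.sum_congr rfl fun i _ => ?_
    rw [intervalIntegral.integral_finsetSum, Finset.mul_sum]
    · refine Finset.sum_congr rfl fun k _ => ?_
      rw [intervalIntegral.integral_const_mul, coeff_integral a f z hf]
      ring
    · intro k _
      exact Continuous.intervalIntegrable (continuous_const.mul (hcont.mul (by fun_prop))) _ _
  · intro i _
    exact Continuous.intervalIntegrable (continuous_finsetSum _ fun k _ =>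
      continuous_const.mul (hcont.mul (by fun_prop))) _ _

lemma parseval (c : ℕ → ℝ) (M : ℕ) :
    (∫ t in (0:ℝ)..(2 * Real.pi), ‖P c M t‖ ^ 2) = 2 * Real.pi * ∑ i ∈ Finset.range M, c i ^ 2 := by
  have h := main_integral (fun n => if n = 0 then 1 else 0) (fun _ => 1) 0 c M
    (by
      intro t
      convert hasSum_single 0 ?_ using 1
      · simp
      · intro n hn; simp [hn])
    continuous_const
  simp only [one_mul] at h
  rw [intervalIntegral.integral_ofReal] at h
  have h2 : ∀ i ∈ Finset.range M, (∑ k ∈ Finset.range M,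
        ((c i * c k : ℝ) : ℂ) * if k ≤ i then (if i - k = 0 then 1 else 0) * (0:ℂ) ^ (i - k) else 0)
        = ((c i ^ 2 : ℝ) : ℂ) := by
    intro i hi
    rw [Finset.sum_eq_single i]
    · simp [sq]
    · intro k _ hk
      split_ifs with h1 h2
      · omega
      · simp
      · simp
    · intro h; exact absurd hi h
  rw [Finset.sum_congr rfl h2] at h
  exact_mod_cast h

lemma telescope (d : ℕ → ℝ) (h0 : d 0 = 0) (M : ℕ) (w : ℂ) :
    (1 - w) * ∑ i ∈ Finset.range M, (d (i + 1) : ℂ) * w ^ i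
      = ∑ i ∈ Finset.range (M + 1), ((d (i + 1) - d i : ℝ) : ℂ) * w ^ i - d (M + 1) * w ^ M := by
  induction M with
  | zero => simp [h0]
  | succ M ih =>
    rw [Finset.sum_range_succ, mul_add, ih, Finset.sum_range_succ _ (M + 1)]
    push_cast
    ring

lemma sum1 (x : ℝ) (M : ℕ) : ∑ i ∈ Finset.range M, ((i + 1 : ℝ) * (x - (i + 1))) ^ 2
    = x ^ 2 * (M * (M + 1) * (2 * M + 1) / 6) - 2 * x * (M * (M + 1) / 2) ^ 2
      + M * (M + 1) * (2 * M + 1) * (3 * M ^ 2 + 3 * M - 1) / 30 := by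
  induction M with
  | zero => simp
  | succ M ih => rw [Finset.sum_range_succ, ih]; push_cast; ring

lemma sum2 (x : ℝ) (M : ℕ) : ∑ i ∈ Finset.range M, (x - 1 - 2 * (i:ℝ)) ^ 2
    = M * (x - 1) ^ 2 - 2 * (x - 1) * (M * (M - 1)) + 4 * ((M - 1) * M * (2 * M - 1) / 6) := by
  induction M with
  | zero => simp
  | succ M ih => rw [Finset.sum_range_succ, ih]; push_cast; ring

/-- Parabolic coefficients. -/
noncomputable def d (n : ℕ) (i : ℕ) : ℝ := (i : ℝ) * ((n : ℝ) + 2 - i)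

/-- Shifted coefficients. -/
noncomputable def c (n : ℕ) (i : ℕ) : ℝ := d n (i + 1)

/-- Mass. -/
noncomputable def S (n : ℕ) : ℝ := ∑ i ∈ Finset.range (n + 1), c n i ^ 2

lemma S_eq (n : ℕ) : S n = (n + 2) * (((n:ℝ) + 2) ^ 4 - 1) / 30 := by
  have := sum1 ((n:ℝ) + 2) (n + 1)
  unfold S c d
  push_cast at this ⊢
  rw [this]; ring

lemma D_eq (n : ℕ) : ∑ i ∈ Finset.range (n + 2), (d n (i + 1) - d n i) ^ 2
    = (n + 2) * (((n:ℝ) + 2) ^ 2 - 1) / 3 := by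
  have := sum2 ((n:ℝ) + 2) (n + 2)
  have h : ∀ i : ℕ, d n (i + 1) - d n i = (n:ℝ) + 2 - 1 - 2 * i := by
    intro i; unfold d; push_cast; ring
  simp_rw [h]
  rw [this]; push_cast; ring

lemma S_pos (n : ℕ) : 0 < S n := by
  rw [S_eq]
  have : (0:ℝ) ≤ n := n.cast_nonneg
  have h : ((n:ℝ) + 2) ^ 4 - 1 > 0 := by nlinarith [pow_pos (by linarith : (0:ℝ) < n + 2) 2, sq_nonneg (((n:ℝ) + 2) ^ 2 - 1)]
  positivity

lemma D_le (n : ℕ) : (n : ℝ) ^ 2 * ∑ i ∈ Finset.range (n + 2), (d n (i + 1) - d n i) ^ 2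
    ≤ 10 * S n := by
  rw [S_eq, D_eq]
  have hn : (0:ℝ) ≤ n := n.cast_nonneg
  have h1 : 0 ≤ ((n:ℝ) + 2) * (((n:ℝ) + 2) ^ 2 - 1) := by
    apply mul_nonneg <;> nlinarith
  have h2 : 10 * (((n:ℝ) + 2) * (((n:ℝ) + 2) ^ 4 - 1) / 30) - (n : ℝ) ^ 2 * (((n:ℝ) + 2) * (((n:ℝ) + 2) ^ 2 - 1) / 3)
    = ((n:ℝ) + 2) * (((n:ℝ) + 2) ^ 2 - 1) * (4 * n + 5) / 3 := by ring
  have h3 : 0 ≤ ((n:ℝ) + 2) * (((n:ℝ) + 2) ^ 2 - 1) * (4 * n + 5) / 3 := by positivity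
  linarith

lemma mulP (n : ℕ) (t : ℝ) : (1 - Complex.exp (t * I)) * P (c n) (n + 1) t
    = P (fun i => d n (i + 1) - d n i) (n + 2) t := by
  unfold P c
  rw [telescope (d n) (by simp [d])]
  have : d n (n + 1 + 1) = 0 := by unfold d; push_cast; ring
  rw [this]; simp

lemma moment (n : ℕ) (hn : 1 ≤ n) :
    (∫ t in (0:ℝ)..(2 * Real.pi), ‖1 - Complex.exp (t * I)‖ * ‖P (c n) (n + 1) t‖ ^ 2)
      ≤ 2 * Real.pi * S n * (6 / n) := by
  have hn0 : (0:ℝ) < n := by exact_mod_cast hn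
  have hP := P_cont (c n) (n + 1)
  have hQ := P_cont (fun i => d n (i + 1) - d n i) (n + 2)
  have hpi := Real.pi_pos
  calc _ ≤ ∫ t in (0:ℝ)..(2 * Real.pi), ((1 / (2 * n) : ℝ) * ‖P (c n) (n + 1) t‖ ^ 2
        + (n / 2 : ℝ) * ‖P (fun i => d n (i + 1) - d n i) (n + 2) t‖ ^ 2) := by
        apply intervalIntegral.integral_mono_on (by positivity)
        · exact Continuous.intervalIntegrable (by fun_prop) _ _
        · exact Continuous.intervalIntegrable (by fun_prop) _ _
        · intro t _
          rw [← mulP, norm_mul, mul_pow, ← mul_assoc, ← add_mul]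
          apply mul_le_mul_of_nonneg_right _ (by positivity)
          set x := ‖1 - Complex.exp (t * I)‖
          have : 1 / (2 * (n:ℝ)) + n / 2 * x ^ 2 - x = (1 - n * x) ^ 2 / (2 * n) := by
            field_simp; ring
          have h2 : 0 ≤ (1 - n * x) ^ 2 / (2 * n) := by positivity
          linarith
    _ = 1 / (2 * n) * (2 * Real.pi * S n)
        + n / 2 * (2 * Real.pi * ∑ i ∈ Finset.range (n + 2), (d n (i + 1) - d n i) ^ 2) := by
        rw [intervalIntegral.integral_add, intervalIntegral.integral_const_mul,
          intervalIntegral.integral_const_mul, parseval, parseval]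
        · rfl
        · exact Continuous.intervalIntegrable (by fun_prop) _ _
        · exact Continuous.intervalIntegrable (by fun_prop) _ _
    _ ≤ _ := by
        have h := D_le n
        have hS := S_pos n
        set D := ∑ i ∈ Finset.range (n + 2), (d n (i + 1) - d n i) ^ 2
        have e : 2 * Real.pi * S n * (6 / n) - (1 / (2 * n) * (2 * Real.pi * S n)
          + n / 2 * (2 * Real.pi * D)) = Real.pi / n * (11 * S n - n ^ 2 * D) := by
          field_simp; ring
        have : 0 ≤ Real.pi / n * (11 * S n - n ^ 2 * D) :=
          mul_nonneg (by positivity) (by linarith)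
        linarith

end VPaux

open VPaux Complex in
/-- There is an absolute constant `C > 0` such that whenever `f` is holomorphic on the
open unit disk, continuous on the closed disk, and its derivative extends continuously
to the closed disk with bound `L`, there is a polynomial `G` of degree at most `n` with
`G(0) = f(0)` and `sup_{|z|=1} |G(z) - f(z)| ≤ C L / n`. -/
theorem polynomial_approx_vp :
    ∃ C > (0 : ℝ), ∀ n : ℕ, 1 ≤ n → ∀ (f : ℂ → ℂ) (L : ℝ),
      DifferentiableOn ℂ f (ball (0 : ℂ) 1) →
      ContinuousOn f (closedBall (0 : ℂ) 1) →
      (∃ g : ℂ → ℂ, ContinuousOn g (closedBall (0 : ℂ) 1) ∧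
        (∀ z ∈ ball (0 : ℂ) 1, g z = deriv f z) ∧
        (∀ z ∈ closedBall (0 : ℂ) 1, ‖g z‖ ≤ L)) →
      ∃ G : Polynomial ℂ, G.natDegree ≤ n ∧ G.eval 0 = f 0 ∧
        ∀ z : ℂ, ‖z‖ = 1 → ‖G.eval z - f z‖ ≤ C * L / n := by
  refine ⟨6, by norm_num, ?_⟩
  rintro n hn f L hf hfc ⟨g, -, hgf, hgL⟩
  have hn0 : (0:ℝ) < n := by exact_mod_cast hn
  have hL : 0 ≤ L := (norm_nonneg _).trans (hgL 0 (by simp))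
  have hpi := Real.pi_pos
  have hS := S_pos n
  set a : ℕ → ℂ := fun m => (m.factorial : ℂ)⁻¹ * iteratedDeriv m f 0 with ha
  have hsum : ∀ w ∈ ball (0:ℂ) 1, HasSum (fun m => a m * w ^ m) (f w) := by
    intro w hw
    have := Complex.hasSum_taylorSeries_on_ball hf hw
    have e : (fun m => a m * w ^ m) =
        fun m : ℕ => (m.factorial : ℂ)⁻¹ • (w - 0) ^ m • iteratedDeriv m f 0 := by
      funext m
      simp only [ha, smul_eq_mul, sub_zero]; ring
    rw [e]
    exact this
  have hmem : ∀ z ∈ ball (0:ℂ) 1, ∀ t : ℝ, z * Complex.exp (-(t * I)) ∈ ball (0:ℂ) 1 := by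
    intro z hz t
    have : -((t:ℂ) * I) = ((-t : ℝ) : ℂ) * I := by push_cast; ring
    rw [mem_ball_zero_iff] at hz ⊢
    rwa [norm_mul, this, Complex.norm_exp_ofReal_mul_I, mul_one]
  have hlip : ∀ z ∈ ball (0:ℂ) 1, ∀ w ∈ ball (0:ℂ) 1, ‖f w - f z‖ ≤ L * ‖w - z‖ := by
    intro z hz w hw
    refine Convex.norm_image_sub_le_of_norm_deriv_le (s := ball (0:ℂ) 1) (fun x hx => hf.differentiableAt (isOpen_ball.mem_nhds hx)) ?_ (convex_ball _ _) hz hw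
    intro x hx
    rw [← hgf x hx]
    exact hgL x (ball_subset_closedBall hx)
  have hcont : ∀ z ∈ ball (0:ℂ) 1, Continuous fun t : ℝ => f (z * Complex.exp (-(t * I))) := by
    intro z hz
    exact hf.continuousOn.comp_continuous (by fun_prop) (hmem z hz)
  let G : Polynomial ℂ := ∑ i ∈ Finset.range (n + 1), ∑ k ∈ Finset.range (n + 1),
    if k ≤ i then Polynomial.C ((S n : ℂ)⁻¹ * ((c n i * c n k : ℝ) : ℂ) * a (i - k)) *
      Polynomial.X ^ (i - k) else 0
  have hSc : (S n : ℂ) ≠ 0 := by exact_mod_cast hS.ne'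
  have hpc : (Real.pi : ℂ) ≠ 0 := by exact_mod_cast hpi.ne'
  have hG : ∀ z ∈ ball (0:ℂ) 1, (∫ t in (0:ℝ)..(2 * Real.pi), f (z * Complex.exp (-(t * I))) *
      ((‖P (c n) (n + 1) t‖ ^ 2 : ℝ) : ℂ)) = 2 * Real.pi * S n * G.eval z := by
    intro z hz
    rw [main_integral a f z (c n) (n + 1) (fun t => hsum _ (hmem z hz t)) (hcont z hz)]
    rw [mul_assoc (2 * (Real.pi : ℂ)) (S n : ℂ)]
    congr 1
    simp only [G, Polynomial.eval_finsetSum, Finset.mul_sum]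
    refine Finset.sum_congr rfl fun i _ => Finset.sum_congr rfl fun k _ => ?_
    split_ifs
    · simp only [Polynomial.eval_mul, Polynomial.eval_C, Polynomial.eval_pow, Polynomial.eval_X]
      field_simp
    · simp
  have hmass : (∫ t in (0:ℝ)..(2 * Real.pi), ((‖P (c n) (n + 1) t‖ ^ 2 : ℝ) : ℂ))
      = 2 * Real.pi * S n := by
    rw [intervalIntegral.integral_ofReal, parseval]
    push_cast [S]; rfl
  have hPc := P_cont (c n) (n + 1)
  refine ⟨G, ?_, ?_, ?_⟩
  · refine Polynomial.natDegree_sum_le_of_forall_le _ _ fun i hi =>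
      Polynomial.natDegree_sum_le_of_forall_le _ _ fun k hk => ?_
    split_ifs
    · refine (Polynomial.natDegree_C_mul_X_pow_le _ _).trans ?_
      have := Finset.mem_range.1 hi
      omega
    · simp
  · have h := hG 0 (by simp)
    simp only [zero_mul] at h
    rw [intervalIntegral.integral_const_mul, hmass, mul_comm] at h
    exact (mul_left_cancel₀ (by simp [hSc, hpc]) h).symm
  · have hin : ∀ z ∈ ball (0:ℂ) 1, ‖G.eval z - f z‖ ≤ 6 * L / n := by
      intro z hz
      have hczt := hcont z hz
      have e : 2 * Real.pi * S n * (G.eval z - f z) = ∫ t in (0:ℝ)..(2 * Real.pi),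
          (f (z * Complex.exp (-(t * I))) - f z) * ((‖P (c n) (n + 1) t‖ ^ 2 : ℝ) : ℂ) := by
        simp_rw [sub_mul]
        rw [intervalIntegral.integral_sub, hG z hz, intervalIntegral.integral_const_mul, hmass]
        · ring
        · exact Continuous.intervalIntegrable (hczt.mul (by fun_prop)) _ _
        · exact Continuous.intervalIntegrable (by fun_prop) _ _
      have hb : ‖∫ t in (0:ℝ)..(2 * Real.pi),
          (f (z * Complex.exp (-(t * I))) - f z) * ((‖P (c n) (n + 1) t‖ ^ 2 : ℝ) : ℂ)‖
          ≤ ∫ t in (0:ℝ)..(2 * Real.pi),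
            L * (‖1 - Complex.exp (t * I)‖ * ‖P (c n) (n + 1) t‖ ^ 2) := by
        refine intervalIntegral.norm_integral_le_of_norm_le (by positivity)
          (Filter.Eventually.of_forall fun t _ => ?_)
          (Continuous.intervalIntegrable (by fun_prop) _ _)
        rw [norm_mul, Complex.norm_real, Real.norm_of_nonneg (by positivity), ← mul_assoc]
        refine mul_le_mul_of_nonneg_right ?_ (by positivity)
        refine (hlip z hz _ (hmem z hz t)).trans (mul_le_mul_of_nonneg_left ?_ hL)
        have e1 : z * Complex.exp (-(t * I)) - z
            = z * Complex.exp (-(t * I)) * (1 - Complex.exp (t * I)) := by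
          rw [mul_sub, mul_assoc z, mul_assoc z, ← Complex.exp_add]; simp
        rw [e1, norm_mul]
        have := mem_ball_zero_iff.1 (hmem z hz t)
        exact mul_le_of_le_one_left (norm_nonneg _) this.le
      rw [← e, intervalIntegral.integral_const_mul] at hb
      have h3 := hb.trans (mul_le_mul_of_nonneg_left (moment n hn) hL)
      have e2 : ‖(2 * Real.pi * S n : ℂ)‖ = 2 * Real.pi * S n := by
        rw [← Complex.ofReal_ofNat, ← Complex.ofReal_mul, ← Complex.ofReal_mul, Complex.norm_real,
          Real.norm_of_nonneg (by positivity)]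
      rw [norm_mul, e2] at h3
      have h4 : 2 * Real.pi * S n * ‖G.eval z - f z‖ ≤ 2 * Real.pi * S n * (6 * L / n) := by
        refine h3.trans (le_of_eq ?_); ring
      exact le_of_mul_le_mul_left h4 (by positivity)
    intro z hz
    have hzc : z ∈ closure (ball (0:ℂ) 1) := by
      rw [closure_ball _ one_ne_zero]; simp [hz]
    have hzb : z ∈ closedBall (0:ℂ) 1 := by simp [hz]
    refine ContinuousWithinAt.closure_le hzc (f := fun z => ‖G.eval z - f z‖)
      (g := fun _ => 6 * L / n) ?_ continuousWithinAt_const hin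
    exact (G.continuous.continuousWithinAt.sub ((hfc z hzb).mono ball_subset_closedBall)).norm
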